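/- Let S be an ordered semigroup with real multiplication satisfying axioms O1–O6. Let f₁, …, f_n and g₁, …, g_m be elements of S such that f₁ + ⋯ + f_n ≤ g₁ + ⋯ + g_m, and let f₁', …, f_n' ∈ S satisfy f_i' ≪ f_i for all i. Then there exist elements h_{i,j} ∈ S (1 ≤ i ≤ n, 1 ≤ j ≤ m) such that f_i' ≪ h_{i,1} + ⋯ + h_{i,m} ≪ f_i for all i, and h_{1,j} + ⋯ + h_{n,j} ≤ g_j for all j. -/

import Mathlib

open scoped ENNReal

/-- `CC s t` : `s` is (sequentially) compactly contained in `t`, written `s ≪ t`. -/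
def CC {S : Type*} [AddCommMonoid S] [PartialOrder S] (s t : S) : Prop :=
  ∀ u : ℕ → S, Monotone u → ∀ x : S, IsLUB (Set.range u) x → t ≤ x → ∃ n, s ≤ u n

/-- An ordered semigroup (positive, with translation invariant order) satisfying axioms O1-O5. -/
structure CuO5 (S : Type*) [AddCommMonoid S] [PartialOrder S] : Prop where
  addRightMono : ∀ {s t : S}, s ≤ t → ∀ r : S, s + r ≤ t + r
  zeroLe : ∀ s : S, 0 ≤ s
  O1 : ∀ u : ℕ → S, Monotone u → ∃ x : S, IsLUB (Set.range u) x
  O2 : ∀ s : S, ∃ u : ℕ → S, (∀ n, CC (u n) (u (n + 1))) ∧ IsLUB (Set.range u) s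
  O3 : ∀ {s₁ t₁ s₂ t₂ : S}, CC s₁ t₁ → CC s₂ t₂ → CC (s₁ + s₂) (t₁ + t₂)
  O4 : ∀ u v : ℕ → S, Monotone u → Monotone v → ∀ x y : S,
    IsLUB (Set.range u) x → IsLUB (Set.range v) y →
    IsLUB (Set.range fun n => u n + v n) (x + y)
  O5 : ∀ {s' s t : S}, CC s' s → s ≤ t → ∃ r : S, s' + r ≤ t ∧ t ≤ s + r

/-- Axioms O1-O6. -/
structure CuO6 (S : Type*) [AddCommMonoid S] [PartialOrder S] extends CuO5 S : Prop where
  O6 : ∀ {s r t : S}, s ≤ r + t → ∀ {s' : S}, CC s' s →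
    ∃ r' t' : S, s' ≤ r' + t' ∧ r' ≤ r ∧ r' ≤ s ∧ t' ≤ t ∧ t' ≤ s

/-- A functional on `S`: additive, order preserving, zero preserving map to `[0,∞]`
preserving suprema of increasing sequences. -/
structure IsFunctional {S : Type*} [AddCommMonoid S] [PartialOrder S] (l : S → ℝ≥0∞) : Prop where
  map_zero : l 0 = 0
  map_add : ∀ s t : S, l (s + t) = l s + l t
  mono : ∀ {s t : S}, s ≤ t → l s ≤ l t
  map_sup : ∀ u : ℕ → S, Monotone u → ∀ x : S, IsLUB (Set.range u) x → l x = ⨆ n, l (u n)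

/-- Real multiplication on `S` : a map `(0,∞] × S → S` additive, order preserving and
sup-(of increasing sequences)-preserving in each variable, with `1 · s = s`.
Scalars are elements of `ℝ≥0∞` required to be positive. -/
structure RealMul (S : Type*) [AddCommMonoid S] [PartialOrder S] where
  smul : ℝ≥0∞ → S → S
  add_left : ∀ {a b : ℝ≥0∞}, 0 < a → 0 < b → ∀ s : S, smul (a + b) s = smul a s + smul b s
  add_right : ∀ {a : ℝ≥0∞}, 0 < a → ∀ s t : S, smul a (s + t) = smul a s + smul a t
  mono_left : ∀ {a b : ℝ≥0∞}, 0 < a → a ≤ b → ∀ s : S, smul a s ≤ smul b s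
  mono_right : ∀ {a : ℝ≥0∞}, 0 < a → ∀ {s t : S}, s ≤ t → smul a s ≤ smul a t
  sup_left : ∀ u : ℕ → ℝ≥0∞, Monotone u → 0 < u 0 → ∀ s : S,
    IsLUB (Set.range fun n => smul (u n) s) (smul (⨆ n, u n) s)
  sup_right : ∀ {a : ℝ≥0∞}, 0 < a → ∀ u : ℕ → S, Monotone u → ∀ x : S,
    IsLUB (Set.range u) x → IsLUB (Set.range fun n => smul a (u n)) (smul a x)
  one_smul : ∀ s : S, smul 1 s = s

/-- `D` is a dense subset of `S`: every element of `S` is the supremum of a rapidly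
increasing sequence of elements of `D`. -/
def IsDenseSub {S : Type*} [AddCommMonoid S] [PartialOrder S] (D : Set S) : Prop :=
  ∀ s : S, ∃ u : ℕ → S, (∀ n, u n ∈ D) ∧ (∀ n, CC (u n) (u (n + 1))) ∧ IsLUB (Set.range u) s

/-- `m` is the least upper bound of the functionals `l₁` and `l₂` in `F(S)`
(pointwise order). -/
def IsFSup {S : Type*} [AddCommMonoid S] [PartialOrder S] (l₁ l₂ m : S → ℝ≥0∞) : Prop :=
  IsFunctional m ∧ (∀ s, l₁ s ≤ m s) ∧ (∀ s, l₂ s ≤ m s) ∧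
    ∀ d : S → ℝ≥0∞, IsFunctional d → (∀ s, l₁ s ≤ d s) → (∀ s, l₂ s ≤ d s) → ∀ s, m s ≤ d s

/-- `m` is the greatest lower bound of the functionals `l₁` and `l₂` in `F(S)`
(pointwise order). -/
def IsFInf {S : Type*} [AddCommMonoid S] [PartialOrder S] (l₁ l₂ m : S → ℝ≥0∞) : Prop :=
  IsFunctional m ∧ (∀ s, m s ≤ l₁ s) ∧ (∀ s, m s ≤ l₂ s) ∧
    ∀ d : S → ℝ≥0∞, IsFunctional d → (∀ s, d s ≤ l₁ s) → (∀ s, d s ≤ l₂ s) → ∀ s, d s ≤ m s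

/-- An isomorphism of ordered semigroups between `S` and the extended natural numbers. -/
def IsOrdSemigroupIso {S : Type*} [AddCommMonoid S] [PartialOrder S] (e : S ≃ ℕ∞) : Prop :=
  (∀ a b : S, e (a + b) = e a + e b) ∧ e 0 = 0 ∧ ∀ a b : S, a ≤ b ↔ e a ≤ e b

section CompactContainment

variable {S : Type*} [AddCommMonoid S] [PartialOrder S] {r s t x x' y : S}

theorem CC.le (h : CC s t) : s ≤ t := by
  obtain ⟨_, hn⟩ := h (fun _ => t) monotone_const t (by simp) le_rfl
  exact hn

theorem CC.trans_le (h : CC s t) (htr : t ≤ r) : CC s r :=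
  fun u hu x hx hrx => h u hu x hx (htr.trans hrx)

theorem LE.le.trans_cc (hst : s ≤ t) (h : CC t r) : CC s r := fun u hu x hx hrx =>
  let ⟨n, hn⟩ := h u hu x hx hrx
  ⟨n, hst.trans hn⟩

theorem CuO6.cc_zero (hS : CuO6 S) (s : S) : CC 0 s := fun u _ _ _ _ => ⟨0, hS.zeroLe (u 0)⟩

theorem CuO6.cc_sum (hS : CuO6 S) {ι : Type*} (I : Finset ι) {a b : ι → S}
    (h : ∀ i, CC (a i) (b i)) : CC (∑ i ∈ I, a i) (∑ i ∈ I, b i) := by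
  classical
  induction I using Finset.induction_on with
  | empty => simpa using hS.cc_zero 0
  | insert i I hi ih =>
    rw [Finset.sum_insert hi, Finset.sum_insert hi]
    exact hS.O3 (h i) ih

/-- A rapidly increasing sequence approximating `x` and lying above a given `x' ≪ x`. -/
theorem CuO6.exists_seq (hS : CuO6 S) (h : CC x' x) :
    ∃ u : ℕ → S, x' ≤ u 0 ∧ (∀ n, CC (u n) (u (n + 1))) ∧ ∀ n, CC (u n) x := by
  obtain ⟨u, hu, hux⟩ := hS.O2 x
  obtain ⟨n, hn⟩ := h u (monotone_nat_of_le_succ fun n => (hu n).le) x hux le_rfl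
  refine ⟨fun k => u (n + k), hn, fun k => hu _, fun k => ?_⟩
  exact (hu _).trans_le (hux.1 ⟨_, rfl⟩)

theorem CuO6.exists_between (hS : CuO6 S) (h : CC x' x) : ∃ y, CC x' y ∧ CC y x := by
  obtain ⟨u, h0, hu, hux⟩ := hS.exists_seq h
  exact ⟨u 1, h0.trans_cc (hu 0), hux 1⟩

theorem CuO6.exists_cc_add (hS : CuO6 S) (h : CC r (s + t)) :
    ∃ s' t', CC s' s ∧ CC t' t ∧ r ≤ s' + t' := by
  obtain ⟨u, hu, hus⟩ := hS.O2 s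
  obtain ⟨v, hv, hvt⟩ := hS.O2 t
  have hum : Monotone u := monotone_nat_of_le_succ fun n => (hu n).le
  have hvm : Monotone v := monotone_nat_of_le_succ fun n => (hv n).le
  have huv : Monotone fun n => u n + v n := fun a b hab =>
    (hS.addRightMono (hum hab) _).trans
      (by simpa only [add_comm] using hS.addRightMono (hvm hab) (u b))
  obtain ⟨n, hn⟩ := h _ huv _ (hS.O4 u v hum hvm s t hus hvt) le_rfl
  exact ⟨u n, v n, (hu n).trans_le (hus.1 ⟨_, rfl⟩), (hv n).trans_le (hvt.1 ⟨_, rfl⟩), hn⟩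

variable [IsOrderedAddMonoid S]

theorem CuO6.exists_cc_sum (hS : CuO6 S) {ι : Type*} (I : Finset ι) (a : ι → S)
    (h : CC r (∑ i ∈ I, a i)) : ∃ b : ι → S, (∀ i, CC (b i) (a i)) ∧ r ≤ ∑ i ∈ I, b i := by
  classical
  induction I using Finset.induction_on generalizing r with
  | empty => exact ⟨0, fun i => hS.cc_zero _, by simpa using h.le⟩
  | insert i I hi ih =>
    rw [Finset.sum_insert hi] at h
    obtain ⟨s', t', hs, ht, hr⟩ := hS.exists_cc_add h
    obtain ⟨b, hb, htb⟩ := ih ht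
    refine ⟨Function.update b i s', fun j => ?_, ?_⟩
    · rcases eq_or_ne j i with rfl | hj
      · simpa using hs
      · simpa [hj] using hb j
    · rw [Finset.sum_insert hi, Finset.sum_update_of_notMem hi, Function.update_self]
      exact hr.trans (by gcongr)

/-- Axiom O6 for finitely many summands. -/
theorem CuO6.exists_le_sum (hS : CuO6 S) {ι : Type*} (I : Finset ι) (g : ι → S)
    (hx : CC x' x) (h : x ≤ ∑ i ∈ I, g i) :
    ∃ r : ι → S, (∀ i, r i ≤ x) ∧ (∀ i, r i ≤ g i) ∧ x' ≤ ∑ i ∈ I, r i := by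
  classical
  induction I using Finset.induction_on generalizing x x' with
  | empty => exact ⟨0, fun i => hS.zeroLe _, fun i => hS.zeroLe _, hx.le.trans (by simpa using h)⟩
  | insert i I hi ih =>
    rw [Finset.sum_insert hi] at h
    obtain ⟨y, hxy, hyx⟩ := hS.exists_between hx
    obtain ⟨a, b, hab, ha, hax, hb, hbx⟩ := hS.O6 h hyx
    obtain ⟨a', b', haa, hbb, hxab⟩ := hS.exists_cc_add (hxy.trans_le hab)
    obtain ⟨r, hrb, hrg, hbr⟩ := ih hbb hb
    refine ⟨Function.update r i a, fun j => ?_, fun j => ?_, ?_⟩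
    · rcases eq_or_ne j i with rfl | hj
      · simpa using hax
      · simpa [hj] using (hrb j).trans hbx
    · rcases eq_or_ne j i with rfl | hj
      · simpa using ha
      · simpa [hj] using hrg j
    · rw [Finset.sum_insert hi, Finset.sum_update_of_notMem hi, Function.update_self]
      exact hxab.trans (add_le_add haa.le hbr)

end CompactContainment

section RationalScalars

theorem monotone_add_one_div_add_two : Monotone fun k : ℕ => ((k + 1) / (k + 2) : ℚ≥0) :=
  monotone_nat_of_le_succ fun k => by
    rw [div_le_div_iff₀ (by positivity) (by positivity)]
    push_cast
    calc ((k : ℚ≥0) + 1) * (k + 1 + 2) ≤ (k + 1) * (k + 1 + 2) + 1 := le_self_add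
      _ = _ := by ring

variable {S : Type*} [AddCommMonoid S] [PartialOrder S] [Module ℚ≥0 S] {a b c s t x x' : S}

theorem CC.smul [PosSMulMono ℚ≥0 S] {q : ℚ≥0} (hq : 0 < q) (h : CC s t) : CC (q • s) (q • t) := by
  intro u hu x hx htx
  have cancel : ∀ y : S, q⁻¹ • q • y = y := fun y => inv_smul_smul₀ hq.ne' y
  have hlub : IsLUB (Set.range fun n => q⁻¹ • u n) (q⁻¹ • x) := by
    refine ⟨?_, fun z hz => ?_⟩
    · rintro _ ⟨n, rfl⟩
      exact smul_le_smul_of_nonneg_left (hx.1 ⟨n, rfl⟩) zero_le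
    · have : x ≤ q • z := hx.2 <| by
        rintro _ ⟨n, rfl⟩
        simpa [smul_inv_smul₀ hq.ne'] using
          smul_le_smul_of_nonneg_left (hz ⟨n, rfl⟩) (zero_le (a := q))
      simpa [cancel] using smul_le_smul_of_nonneg_left this (zero_le (a := q⁻¹))
  obtain ⟨n, hn⟩ := h _ (fun i j hij => smul_le_smul_of_nonneg_left (hu hij) zero_le) _ hlub
    (by simpa [cancel] using smul_le_smul_of_nonneg_left htx (zero_le (a := q⁻¹)))
  exact ⟨n, by simpa [smul_inv_smul₀ hq.ne'] using
    smul_le_smul_of_nonneg_left hn (zero_le (a := q))⟩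

variable [IsOrderedAddMonoid S]

theorem CuO6.smul_le_smul_right (hS : CuO6 S) {p q : ℚ≥0} (hpq : p ≤ q) (s : S) :
    p • s ≤ q • s := by
  rw [← add_tsub_cancel_of_le hpq, add_smul]
  exact le_add_of_nonneg_right (hS.zeroLe _)

theorem CuO6.smul_le_self (hS : CuO6 S) {p : ℚ≥0} (hp : p ≤ 1) (s : S) : p • s ≤ s := by
  simpa using hS.smul_le_smul_right hp s

variable [PosSMulMono ℚ≥0 S]

/-- Cancellation of a summand that is dominated by the right-hand side. -/
theorem CuO6.le_of_add_le_add (hS : CuO6 S)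
    (hlim : ∀ s : S, IsLUB (Set.range fun k : ℕ => ((k + 1 : ℚ≥0) / (k + 2)) • s) s)
    (h : a + c ≤ b + c) (hc : c ≤ b) : a ≤ b := by
  have hmul : ∀ n : ℕ, n • a + c ≤ n • b + c := by
    intro n
    induction n with
    | zero => simp
    | succ n ih =>
      calc (n + 1) • a + c = n • a + c + a := by rw [succ_nsmul]; abel
        _ ≤ n • b + c + a := by gcongr
        _ = n • b + (a + c) := by abel
        _ ≤ n • b + (b + c) := by gcongr
        _ = (n + 1) • b + c := by rw [succ_nsmul]; abel
  refine (hlim a).2 ?_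
  rintro _ ⟨k, rfl⟩
  have h1 : ((k + 1 : ℕ) : ℚ≥0) • a ≤ ((k + 2 : ℕ) : ℚ≥0) • b := by
    rw [Nat.cast_smul_eq_nsmul, Nat.cast_smul_eq_nsmul]
    calc (k + 1) • a ≤ (k + 1) • a + c := le_add_of_nonneg_right (hS.zeroLe _)
      _ ≤ (k + 1) • b + c := hmul _
      _ ≤ (k + 1) • b + b := by gcongr
      _ = (k + 2) • b := by rw [← succ_nsmul]
  have h2 := smul_le_smul_of_nonneg_left h1 (zero_le (a := ((k : ℚ≥0) + 2)⁻¹))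
  rw [smul_smul, smul_smul] at h2
  push_cast at h2
  rw [inv_mul_cancel₀ (by positivity), one_smul] at h2
  simpa only [div_eq_inv_mul] using h2

/-- Averaging a rapidly increasing sequence yields approximants of `x` that differ from each
other by at most a small multiple of `x`. -/
theorem CuO6.exists_average (hS : CuO6 S) (h : CC x' x) {ε : ℚ≥0} (hε : 0 < ε) :
    ∃ a b c : S, x' ≤ a ∧ CC a b ∧ CC b c ∧ c ≤ x ∧ c ≤ a + ε • x := by
  obtain ⟨u, h0, hu, hux⟩ := hS.exists_seq h
  have hum : Monotone u := monotone_nat_of_le_succ fun n => (hu n).le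
  obtain ⟨M, hM⟩ := exists_nat_gt (2 / ε)
  have hM0 : (0 : ℚ≥0) < M := lt_of_le_of_lt zero_le hM
  have hM1 : (0 : ℚ≥0) < (M : ℚ≥0)⁻¹ := inv_pos.2 hM0
  have hinv : ∀ y : S, (M : ℚ≥0)⁻¹ • M • y = y := fun y => by
    rw [← Nat.cast_smul_eq_nsmul ℚ≥0, inv_smul_smul₀ hM0.ne']
  have shift : ∀ N : ℕ, ∑ k ∈ Finset.range N, u (k + 2) ≤
      ∑ k ∈ Finset.range N, u k + (u N + u (N + 1)) := by
    intro N
    induction N with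
    | zero => simpa using add_nonneg (hS.zeroLe _) (hS.zeroLe _)
    | succ N ih =>
      rw [Finset.sum_range_succ, Finset.sum_range_succ]
      calc _ ≤ ∑ k ∈ Finset.range N, u k + (u N + u (N + 1)) + u (N + 2) := by gcongr
        _ = _ := by abel
  refine ⟨(M : ℚ≥0)⁻¹ • ∑ k ∈ Finset.range M, u k,
    (M : ℚ≥0)⁻¹ • ∑ k ∈ Finset.range M, u (k + 1),
    (M : ℚ≥0)⁻¹ • ∑ k ∈ Finset.range M, u (k + 2), ?_,
    (hS.cc_sum _ fun k => hu k).smul hM1, (hS.cc_sum _ fun k => hu (k + 1)).smul hM1, ?_, ?_⟩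
  · rw [← hinv x']
    refine smul_le_smul_of_nonneg_left ?_ hM1.le
    calc M • x' = ∑ k ∈ Finset.range M, x' := by simp
      _ ≤ _ := Finset.sum_le_sum fun k _ => h0.trans (hum (Nat.zero_le k))
  · conv_rhs => rw [← hinv x]
    refine smul_le_smul_of_nonneg_left ?_ hM1.le
    calc _ ≤ ∑ k ∈ Finset.range M, x := Finset.sum_le_sum fun k _ => (hux _).le
      _ = _ := by simp
  · calc _ ≤ (M : ℚ≥0)⁻¹ • (∑ k ∈ Finset.range M, u k + (x + x)) := by
          refine smul_le_smul_of_nonneg_left ((shift M).trans ?_) hM1.le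
          exact add_le_add_right (add_le_add (hux _).le (hux _).le) _
      _ = (M : ℚ≥0)⁻¹ • ∑ k ∈ Finset.range M, u k + (2 / (M : ℚ≥0)) • x := by
          rw [smul_add, ← two_nsmul, ← Nat.cast_smul_eq_nsmul ℚ≥0, smul_smul, div_eq_inv_mul]
          rfl
      _ ≤ _ := by
          refine add_le_add_right (hS.smul_le_smul_right ?_ x) _
          rw [div_le_iff₀ hM0]
          rw [div_lt_iff₀ hε] at hM
          rw [mul_comm]
          exact hM.le

variable {ι κ : Type*} [Fintype ι] [Fintype κ]

/-- One step of the iteration: part of `f` is refined through `g`, and the remainders `F` and `G`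
still satisfy `∑ F ≤ ∑ G`, with `F` strictly smaller than `f` by a uniform factor. -/
theorem CuO6.exists_partial_refinement (hS : CuO6 S)
    (hlim : ∀ s : S, IsLUB (Set.range fun k : ℕ => ((k + 1 : ℚ≥0) / (k + 2)) • s) s)
    {f f' : ι → S} {g : κ → S} (hfg : ∑ i, f i ≤ ∑ j, g j) (hf : ∀ i, CC (f' i) (f i))
    {p q ε : ℚ≥0} (hp : 0 < p) (hpq : p + q = 1) (hle : p ≤ q)
    (hι : Fintype.card ι * p ≤ 1 / 2) (hκ : Fintype.card κ * p ≤ 1) (hε : 0 < ε) :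
    ∃ (h : ι → κ → S) (F F' : ι → S) (G : κ → S),
      (∀ i, ∑ j, h i j + F i ≤ f i) ∧ (∀ j, ∑ i, h i j + G j ≤ g j) ∧ ∑ i, F i ≤ ∑ j, G j ∧
      (∀ i, CC (F' i) (F i)) ∧ (∀ i, f' i ≤ ∑ j, h i j + ε • f i + F' i) ∧
      ∀ i, F i ≤ (q + ε) • f i := by
  have key : ∀ i, ∃ a b : S, f' i ≤ a ∧ CC a b ∧ b ≤ f i ∧ b ≤ a + ε • f i := fun i => by
    obtain ⟨_, a, b, h1, h2, h3, h4, h5⟩ := hS.exists_average (hf i) hε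
    exact ⟨a, b, h1.trans h2.le, h3, h4, h5.trans (by have := h2.le; gcongr)⟩
  choose φ ψ hφ hφψ hψf hψφ using key
  have key : ∀ i, ∃ r : κ → S, (∀ j, r j ≤ ψ i) ∧ (∀ j, r j ≤ g j) ∧ CC (φ i) (∑ j, r j) := by
    intro i
    obtain ⟨y, hy, hy'⟩ := hS.exists_between (hφψ i)
    have hψg : ψ i ≤ ∑ j, g j := (hψf i).trans <|
      (Finset.single_le_sum (fun i _ => hS.zeroLe (f i)) (Finset.mem_univ i)).trans hfg
    obtain ⟨r, h1, h2, h3⟩ := hS.exists_le_sum Finset.univ g hy' hψg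
    exact ⟨r, h1, h2, hy.trans_le h3⟩
  choose r hrψ hrg hφr using key
  have key : ∀ i, ∃ r' : κ → S, (∀ j, CC (r' j) (r i j)) ∧ φ i ≤ ∑ j, r' j :=
    fun i => hS.exists_cc_sum _ _ (hφr i)
  choose r' hr' hφr' using key
  have key : ∀ i j, ∃ a b c : S, p • r' i j ≤ a ∧ CC a b ∧ CC b c ∧ c ≤ p • r i j ∧
      c ≤ a + ε • p • r i j := fun i j => hS.exists_average ((hr' i j).smul hp) hε
  choose a b c ha hab hbc hc hca using key
  have hrow : ∀ i, ∑ j, p • r i j ≤ ψ i := fun i =>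
    calc ∑ j, p • r i j ≤ ∑ j : κ, p • ψ i :=
          Finset.sum_le_sum fun j _ => smul_le_smul_of_nonneg_left (hrψ i j) hp.le
      _ = (Fintype.card κ * p) • ψ i := by
          rw [Finset.sum_const, Finset.card_univ, mul_smul, Nat.cast_smul_eq_nsmul]
      _ ≤ ψ i := hS.smul_le_self hκ _
  have hcol : ∀ j, ∑ i, b i j ≤ (1 / 2 : ℚ≥0) • g j := fun j =>
    calc ∑ i, b i j ≤ ∑ i : ι, p • g j := Finset.sum_le_sum fun i _ =>
          ((hbc i j).le.trans (hc i j)).trans (smul_le_smul_of_nonneg_left (hrg i j) hp.le)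
      _ = (Fintype.card ι * p) • g j := by
          rw [Finset.sum_const, Finset.card_univ, mul_smul, Nat.cast_smul_eq_nsmul]
      _ ≤ _ := hS.smul_le_smul_right hι _
  have hhalf : ∀ j, (1 / 2 : ℚ≥0) • g j + (1 / 2 : ℚ≥0) • g j = g j := fun j => by
    rw [← add_smul, add_halves, one_smul]
  choose F hbF hFc using fun i => hS.O5 (hS.cc_sum Finset.univ fun j => hbc i j)
    ((Finset.sum_le_sum fun j _ => hc i j).trans (hrow i))
  choose G haG hGb using fun j => hS.O5 (hS.cc_sum Finset.univ fun i => hab i j) (hcol j)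
  have hF' : ∀ i, ∃ y, CC y (F i) ∧ φ i ≤ ∑ j, a i j + ε • f i + y := by
    intro i
    have hψ : ψ i ≤ ∑ j, a i j + ε • f i + F i :=
      calc ψ i ≤ ∑ j, c i j + F i := hFc i
        _ ≤ ∑ j, (a i j + ε • p • r i j) + F i := by
            gcongr with j
            exact hca i j
        _ = ∑ j, a i j + ε • ∑ j, p • r i j + F i := by
            rw [Finset.sum_add_distrib, Finset.smul_sum]
        _ ≤ _ := by
            have := (hrow i).trans (hψf i)
            gcongr
    obtain ⟨s, y, hs, hy, hφ'⟩ := hS.exists_cc_add ((hφψ i).trans_le hψ)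
    exact ⟨y, hy, hφ'.trans (by have := hs.le; gcongr)⟩
  choose F' hF'F hφF' using hF'
  refine ⟨a, F, F', fun j => G j + (1 / 2 : ℚ≥0) • g j, fun i => ?_, fun j => ?_, ?_, hF'F,
    fun i => (hφ i).trans (hφF' i), fun i => ?_⟩
  · exact ((add_le_add_left (Finset.sum_le_sum fun j _ => (hab i j).le) _).trans (hbF i)).trans
      (hψf i)
  · calc ∑ i, a i j + (G j + (1 / 2 : ℚ≥0) • g j)
        = (∑ i, a i j + G j) + (1 / 2 : ℚ≥0) • g j := (add_assoc _ _ _).symm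
      _ ≤ (1 / 2 : ℚ≥0) • g j + (1 / 2 : ℚ≥0) • g j := add_le_add_left (haG j) _
      _ = g j := hhalf j
  · refine hS.le_of_add_le_add hlim (c := ∑ i, ∑ j, b i j) ?_ ?_
    · calc ∑ i, F i + ∑ i, ∑ j, b i j = ∑ i, (∑ j, b i j + F i) := by
            rw [Finset.sum_add_distrib, add_comm]
        _ ≤ ∑ i, f i := Finset.sum_le_sum fun i _ => (hbF i).trans (hψf i)
        _ ≤ ∑ j, ((1 / 2 : ℚ≥0) • g j + (1 / 2 : ℚ≥0) • g j) := by simpa only [hhalf] using hfg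
        _ ≤ ∑ j, ((∑ i, b i j + G j) + (1 / 2 : ℚ≥0) • g j) :=
            Finset.sum_le_sum fun j _ => add_le_add_left (hGb j) _
        _ = _ := by
            simp only [Finset.sum_add_distrib]
            rw [Finset.sum_comm]
            abel
    · rw [Finset.sum_comm]
      exact Finset.sum_le_sum fun j _ => (hcol j).trans (le_add_of_nonneg_left (hS.zeroLe _))
  · have hφf : φ i ≤ f i := (hφψ i).le.trans (hψf i)
    have hF : F i ≤ q • φ i + ε • f i := by
      refine hS.le_of_add_le_add hlim (c := p • φ i) ?_ ?_
      · calc F i + p • φ i ≤ F i + ∑ j, b i j := by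
              refine add_le_add_right ?_ _
              calc p • φ i ≤ p • ∑ j, r' i j := smul_le_smul_of_nonneg_left (hφr' i) hp.le
                _ = ∑ j, p • r' i j := Finset.smul_sum
                _ ≤ _ := Finset.sum_le_sum fun j _ => (ha i j).trans (hab i j).le
          _ ≤ ψ i := by rw [add_comm]; exact hbF i
          _ ≤ φ i + ε • f i := hψφ i
          _ = (p + q) • φ i + ε • f i := by rw [hpq, one_smul]
          _ = _ := by rw [add_smul]; abel
      · exact (hS.smul_le_smul_right hle _).trans (le_add_of_nonneg_right (hS.zeroLe _))
    refine hF.trans ?_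
    rw [add_smul]
    gcongr

/-- Refinement up to an error that is a small multiple of `f`. -/
theorem CuO6.exists_refinement_add_pow (hS : CuO6 S)
    (hlim : ∀ s : S, IsLUB (Set.range fun k : ℕ => ((k + 1 : ℚ≥0) / (k + 2)) • s) s)
    {p q : ℚ≥0} (hp : 0 < p) (hpq : p + q = 1) (hle : p ≤ q)
    (hι : Fintype.card ι * p ≤ 1 / 2) (hκ : Fintype.card κ * p ≤ 1) (k : ℕ)
    {f f' : ι → S} {g : κ → S} (hfg : ∑ i, f i ≤ ∑ j, g j) (hf : ∀ i, CC (f' i) (f i)) :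
    ∃ h : ι → κ → S, (∀ i, ∑ j, h i j ≤ f i) ∧ (∀ j, ∑ i, h i j ≤ g j) ∧
      ∀ i, f' i ≤ ∑ j, h i j + (q + p / 2) ^ k • f i := by
  induction k generalizing f f' g with
  | zero => exact ⟨0, fun i => by simpa using hS.zeroLe _, fun j => by simpa using hS.zeroLe _,
      fun i => by simpa using (hf i).le⟩
  | succ k ih =>
    set ρ : ℚ≥0 := q + p / 2 with hρ
    have hρ1 : ρ ≤ 1 := by rw [← hpq, hρ, add_comm p q]; gcongr; exact half_le_self zero_le
    have hρ0 : 0 < ρ := by positivity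
    obtain ⟨h, F, F', G, hF, hG, hFG, hFF, hf', hFq⟩ := hS.exists_partial_refinement hlim hfg hf
      hp hpq hle hι hκ (ε := ρ ^ k * (p / 4)) (by positivity)
    obtain ⟨h₁, h₁F, h₁G, hF'⟩ := ih hFG hFF
    refine ⟨h + h₁, fun i => ?_, fun j => ?_, fun i => ?_⟩
    · simp only [Pi.add_apply, Finset.sum_add_distrib]
      exact (add_le_add_right (h₁F i) _).trans (hF i)
    · simp only [Pi.add_apply, Finset.sum_add_distrib]
      exact (add_le_add_right (h₁G j) _).trans (hG j)
    · simp only [Pi.add_apply, Finset.sum_add_distrib]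
      have hscal : ρ ^ k * (p / 4) + ρ ^ k * (q + ρ ^ k * (p / 4)) ≤ ρ ^ (k + 1) := by
        calc _ ≤ ρ ^ k * (p / 4) + ρ ^ k * (q + 1 * (p / 4)) := by
              gcongr
              exact pow_le_one₀ zero_le hρ1
          _ = _ := by rw [hρ]; ring
      calc f' i ≤ ∑ j, h i j + (ρ ^ k * (p / 4)) • f i + F' i := hf' i
        _ ≤ ∑ j, h i j + (ρ ^ k * (p / 4)) • f i + (∑ j, h₁ i j +
              ρ ^ k • (q + ρ ^ k * (p / 4)) • f i) :=
            add_le_add_right ((hF' i).trans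
              (add_le_add_right (smul_le_smul_of_nonneg_left (hFq i) zero_le) _)) _
        _ = ∑ j, h i j + ∑ j, h₁ i j +
              (ρ ^ k * (p / 4) + ρ ^ k * (q + ρ ^ k * (p / 4))) • f i := by
            rw [smul_smul, add_smul]; abel
        _ ≤ _ := add_le_add_right (hS.smul_le_smul_right hscal _) _

theorem CuO6.exists_refinement_add_smul (hS : CuO6 S)
    (hlim : ∀ s : S, IsLUB (Set.range fun k : ℕ => ((k + 1 : ℚ≥0) / (k + 2)) • s) s)
    {f f' : ι → S} {g : κ → S} (hfg : ∑ i, f i ≤ ∑ j, g j) (hf : ∀ i, CC (f' i) (f i))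
    {η : ℚ≥0} (hη : 0 < η) :
    ∃ h : ι → κ → S, (∀ i, ∑ j, h i j ≤ f i) ∧ (∀ j, ∑ i, h i j ≤ g j) ∧
      ∀ i, f' i ≤ ∑ j, h i j + η • f i := by
  set N : ℚ≥0 := 2 * (Fintype.card ι + Fintype.card κ + 1) with hN
  have hN0 : 0 < N := by positivity
  have hN2 : 2 ≤ N := by rw [hN]; exact le_mul_of_one_le_right zero_le le_add_self
  have hp : N⁻¹ ≤ 1 / 2 := by rw [one_div]; exact inv_anti₀ two_pos hN2
  have hpq : N⁻¹ + (1 - N⁻¹) = 1 := add_tsub_cancel_of_le (hp.trans (by norm_num))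
  have hle : N⁻¹ ≤ 1 - N⁻¹ := le_tsub_of_add_le_left ((add_le_add hp hp).trans (by norm_num))
  have hρ : 1 - N⁻¹ + N⁻¹ / 2 < 1 := by
    calc _ < 1 - N⁻¹ + N⁻¹ := by gcongr; exact half_lt_self (inv_pos.2 hN0)
      _ = 1 := by rw [add_comm, hpq]
  obtain ⟨k, hk⟩ := exists_pow_lt_of_lt_one hη hρ
  obtain ⟨h, h1, h2, h3⟩ := hS.exists_refinement_add_pow hlim (inv_pos.2 hN0) hpq hle
    (by rw [← div_eq_mul_inv, div_le_iff₀ hN0, hN, one_div, inv_mul_cancel_left₀ two_ne_zero,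
          add_assoc]; exact le_self_add)
    (by rw [← div_eq_mul_inv, div_le_one hN0, hN, two_mul]
        exact (le_add_self.trans le_self_add).trans le_self_add) k hfg hf
  exact ⟨h, h1, h2, fun i => (h3 i).trans (add_le_add_right (hS.smul_le_smul_right hk.le _) _)⟩

/-- The refinement property, for an action of the nonnegative rationals. -/
theorem CuO6.exists_refinement (hS : CuO6 S)
    (hlim : ∀ s : S, IsLUB (Set.range fun k : ℕ => ((k + 1 : ℚ≥0) / (k + 2)) • s) s)
    {f f' : ι → S} {g : κ → S} (hfg : ∑ i, f i ≤ ∑ j, g j) (hf : ∀ i, CC (f' i) (f i)) :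
    ∃ h : ι → κ → S, (∀ i, CC (f' i) (∑ j, h i j) ∧ CC (∑ j, h i j) (f i)) ∧
      ∀ j, ∑ i, h i j ≤ g j := by
  have hmono : ∀ s : S, Monotone fun k : ℕ => ((k + 1 : ℚ≥0) / (k + 2)) • s := fun s _ _ hkl =>
    hS.smul_le_smul_right (monotone_add_one_div_add_two hkl) s
  have key : ∀ i, ∃ (k : ℕ) (z : S), CC z (f i) ∧ CC (f' i) (((k + 1 : ℚ≥0) / (k + 2)) • z) := by
    intro i
    obtain ⟨y, hfy, hyf⟩ := hS.exists_between (hf i)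
    obtain ⟨k, hk⟩ := hyf _ (hmono _) _ (hlim _) le_rfl
    have hpos : 0 < (k + 1 : ℚ≥0) / (k + 2) := by positivity
    obtain ⟨x, hfx, hxy⟩ := hS.exists_between hfy
    have hx : CC (((k + 1 : ℚ≥0) / (k + 2))⁻¹ • x) (f i) := by
      refine (hxy.smul (inv_pos.2 hpos)).trans_le ?_
      have := smul_le_smul_of_nonneg_left hk (inv_pos.2 hpos).le
      rwa [inv_smul_smul₀ hpos.ne'] at this
    exact ⟨k, _, hx, by rwa [smul_inv_smul₀ hpos.ne']⟩
  choose k z hzf hfz using key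
  set K := ∑ i, k i with hK
  choose y hzy hyf using fun i => hS.exists_between (hzf i)
  choose x hyx hxf using fun i => hS.exists_between (hyf i)
  have hxg : ∀ i, x i ≤ ∑ j, g j := fun i => (hxf i).le.trans <|
    (Finset.single_le_sum (fun i _ => hS.zeroLe (f i)) (Finset.mem_univ i)).trans hfg
  choose r hrx hrg hyr using fun i => hS.exists_le_sum Finset.univ g (hyx i) (hxg i)
  set L : ℚ≥0 := Fintype.card ι + Fintype.card κ + 1 with hL
  set η : ℚ≥0 := ((K + 1) * L)⁻¹ with hη
  have hη0 : 0 < η := by positivity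
  obtain ⟨u, huy, hug, hzu⟩ := hS.exists_refinement_add_smul hlim
    ((Finset.sum_le_sum fun i _ => (hyf i).le).trans hfg) hzy hη0
  set θ : ℚ≥0 := (K + 1) / (K + 2) with hθ
  have hθη : θ * (1 + L * η) = 1 := by
    have hL0 : L ≠ 0 := by positivity
    rw [hθ, hη]
    field_simp
    ring
  have hbound : ∀ n : ℕ, (n : ℚ≥0) ≤ L → ∀ s : S, θ • (s + η • n • s) ≤ s := by
    intro n hn s
    calc θ • (s + η • n • s) = (θ * (1 + n * η)) • s := by
          rw [← Nat.cast_smul_eq_nsmul ℚ≥0 n s, mul_smul, add_smul, one_smul, mul_comm, mul_smul]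
      _ ≤ (θ * (1 + L * η)) • s := hS.smul_le_smul_right (by gcongr) s
      _ = s := by rw [hθη, one_smul]
  refine ⟨fun i j => θ • (u i j + η • r i j), fun i => ⟨?_, ?_⟩, fun j => ?_⟩
  · refine (hfz i).trans_le ?_
    calc ((k i + 1 : ℚ≥0) / (k i + 2)) • z i ≤ θ • z i := by
          have := hmono (z i) (Finset.single_le_sum (fun i _ => Nat.zero_le (k i))
            (Finset.mem_univ i))
          simpa only [hθ, hK] using this
      _ ≤ θ • (∑ j, u i j + η • ∑ j, r i j) := by
          refine smul_le_smul_of_nonneg_left ((hzu i).trans ?_) zero_le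
          exact add_le_add_right (smul_le_smul_of_nonneg_left (hyr i) zero_le) _
      _ = _ := by rw [← Finset.smul_sum, Finset.sum_add_distrib, Finset.smul_sum]
  · refine LE.le.trans_cc ?_ (hxf i)
    calc ∑ j, θ • (u i j + η • r i j) = θ • (∑ j, u i j + η • ∑ j, r i j) := by
          rw [← Finset.smul_sum, Finset.sum_add_distrib, Finset.smul_sum]
      _ ≤ θ • (x i + η • Fintype.card κ • x i) := by
          have h1 := (huy i).trans (hyx i).le
          have h2 : ∑ j, r i j ≤ Fintype.card κ • x i := Finset.sum_le_card_nsmul _ _ _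
            fun j _ => hrx i j
          gcongr
      _ ≤ x i := hbound _ (le_add_self.trans le_self_add) _
  · calc ∑ i, θ • (u i j + η • r i j) = θ • (∑ i, u i j + η • ∑ i, r i j) := by
          rw [← Finset.smul_sum, Finset.sum_add_distrib, Finset.smul_sum]
      _ ≤ θ • (g j + η • Fintype.card ι • g j) := by
          have h1 := hug j
          have h2 : ∑ i, r i j ≤ Fintype.card ι • g j := Finset.sum_le_card_nsmul _ _ _
            fun i _ => hrg i j
          gcongr
      _ ≤ g j := hbound _ (le_self_add.trans le_self_add) _

end RationalScalars

namespace RealMul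

open scoped NNReal

variable {S : Type*} [AddCommMonoid S] [PartialOrder S]

theorem smul_natCast (rm : RealMul S) (n : ℕ) (hn : 0 < n) (s : S) : rm.smul n s = n • s := by
  induction n, hn using Nat.le_induction with
  | base => simpa using rm.one_smul s
  | succ n hn ih =>
    rw [Nat.cast_succ, rm.add_left (by exact_mod_cast hn) one_pos, ih, rm.one_smul, succ_nsmul]

theorem smul_nsmul (rm : RealMul S) {a : ℝ≥0∞} (ha : 0 < a) (n : ℕ) (hn : 0 < n) (s : S) :
    rm.smul a (n • s) = n • rm.smul a s := by
  induction n, hn using Nat.le_induction with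
  | base => simp
  | succ n hn ih => rw [succ_nsmul, rm.add_right ha, ih, succ_nsmul]

theorem natCast_mul_smul (rm : RealMul S) {a : ℝ≥0∞} (ha : 0 < a) (n : ℕ) (hn : 0 < n) (s : S) :
    rm.smul (n * a) s = n • rm.smul a s := by
  induction n, hn using Nat.le_induction with
  | base => simp
  | succ n hn ih =>
    rw [Nat.cast_succ, add_mul, one_mul,
      rm.add_left (ENNReal.mul_pos (by exact_mod_cast Nat.pos_iff_ne_zero.1 hn) ha.ne') ha, ih, succ_nsmul]

theorem nsmul_injective (rm : RealMul S) (n : ℕ) (hn : 0 < n) : Function.Injective fun s : S => n • s := by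
  have hn' : (n : ℝ≥0∞) ≠ 0 := by exact_mod_cast hn.ne'
  have ha : 0 < (n : ℝ≥0∞)⁻¹ := by simp
  have key : ∀ s : S, rm.smul (n : ℝ≥0∞)⁻¹ (n • s) = s := fun s => by
    rw [rm.smul_nsmul ha n hn, ← rm.natCast_mul_smul ha n hn,
      ENNReal.mul_inv_cancel hn' (ENNReal.natCast_ne_top n), rm.one_smul]
  exact Function.LeftInverse.injective key

theorem smul_zero_right (hS : CuO6 S) (rm : RealMul S) {n : ℕ} (hn : 0 < n) {a : ℝ≥0∞}
    (ha : 0 < a) (han : a ≤ n) : rm.smul a 0 = 0 := by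
  refine le_antisymm ?_ (hS.zeroLe _)
  simpa [rm.smul_natCast n hn] using rm.mono_left ha han 0

/-- The action of the nonnegative rationals induced by a real multiplication. -/
noncomputable def nnratSMul (rm : RealMul S) (q : ℚ≥0) (s : S) : S :=
  if q = 0 then 0 else rm.smul ((q : ℝ≥0) : ℝ≥0∞) s

theorem nnratSMul_zero_left (rm : RealMul S) (s : S) : rm.nnratSMul 0 s = 0 := if_pos rfl

theorem nnratSMul_of_pos (rm : RealMul S) {q : ℚ≥0} (hq : 0 < q) (s : S) :
    rm.nnratSMul q s = rm.smul ((q : ℝ≥0) : ℝ≥0∞) s := if_neg hq.ne'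

theorem coe_nnrat_pos {q : ℚ≥0} (hq : 0 < q) : 0 < ((q : ℝ≥0) : ℝ≥0∞) := by
  exact_mod_cast hq

theorem nnratSMul_one (rm : RealMul S) (s : S) : rm.nnratSMul 1 s = s := by
  rw [rm.nnratSMul_of_pos one_pos]
  simpa using rm.one_smul s

theorem nnratSMul_zero_right (hS : CuO6 S) (rm : RealMul S) (q : ℚ≥0) :
    rm.nnratSMul q 0 = 0 := by
  rcases eq_zero_or_pos q with rfl | hq
  · exact rm.nnratSMul_zero_left 0
  · rw [rm.nnratSMul_of_pos hq]
    obtain ⟨n, hn⟩ := exists_nat_gt q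
    refine smul_zero_right hS rm (n := n) ?_ (coe_nnrat_pos hq) ?_
    · exact_mod_cast hq.trans hn
    · exact_mod_cast hn.le

theorem nnratSMul_add_right (rm : RealMul S) (q : ℚ≥0) (s t : S) :
    rm.nnratSMul q (s + t) = rm.nnratSMul q s + rm.nnratSMul q t := by
  rcases eq_zero_or_pos q with rfl | hq
  · simp [nnratSMul_zero_left]
  · simpa only [rm.nnratSMul_of_pos hq] using rm.add_right (coe_nnrat_pos hq) s t

theorem nnratSMul_add_left (rm : RealMul S) (p q : ℚ≥0) (s : S) :
    rm.nnratSMul (p + q) s = rm.nnratSMul p s + rm.nnratSMul q s := by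
  rcases eq_zero_or_pos p with rfl | hp
  · simp [nnratSMul_zero_left]
  rcases eq_zero_or_pos q with rfl | hq
  · simp [nnratSMul_zero_left]
  rw [rm.nnratSMul_of_pos hp, rm.nnratSMul_of_pos hq, rm.nnratSMul_of_pos (by positivity),
    ← rm.add_left (coe_nnrat_pos hp) (coe_nnrat_pos hq)]
  push_cast
  rfl

theorem nnratSMul_mul (hS : CuO6 S) (rm : RealMul S) (p q : ℚ≥0) (s : S) :
    rm.nnratSMul (p * q) s = rm.nnratSMul p (rm.nnratSMul q s) := by
  rcases eq_zero_or_pos p with rfl | hp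
  · simp [nnratSMul_zero_left]
  rcases eq_zero_or_pos q with rfl | hq
  · simp [nnratSMul_zero_left, nnratSMul_zero_right hS]
  rw [rm.nnratSMul_of_pos hp, rm.nnratSMul_of_pos hq, rm.nnratSMul_of_pos (by positivity)]
  have hpn : 0 < p.num := NNRat.num_pos.2 hp
  have hden : (p.den : ℝ≥0∞) * ((p : ℝ≥0) : ℝ≥0∞) = p.num := by
    have : (p.den : ℝ≥0) * (p : ℝ≥0) = p.num := by exact_mod_cast p.den_mul_eq_num
    exact_mod_cast this
  apply rm.nsmul_injective p.den p.den_pos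
  simp only
  rw [← rm.natCast_mul_smul (coe_nnrat_pos (by positivity)) _ p.den_pos,
    ← rm.natCast_mul_smul (coe_nnrat_pos hp) _ p.den_pos, hden, rm.smul_natCast _ hpn,
    ← rm.natCast_mul_smul (coe_nnrat_pos hq) _ hpn, ← hden]
  push_cast
  rw [mul_assoc]

theorem nnratSMul_mono_right (rm : RealMul S) (q : ℚ≥0) {s t : S} (hst : s ≤ t) :
    rm.nnratSMul q s ≤ rm.nnratSMul q t := by
  rcases eq_zero_or_pos q with rfl | hq
  · simp [nnratSMul_zero_left]
  · simpa only [rm.nnratSMul_of_pos hq] using rm.mono_right (coe_nnrat_pos hq) hst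

theorem isLUB_nnratSMul (rm : RealMul S) (s : S) :
    IsLUB (Set.range fun k : ℕ => rm.nnratSMul ((k + 1) / (k + 2)) s) s := by
  set v : ℕ → ℝ≥0∞ := fun k => ((((k + 1) / (k + 2) : ℚ≥0) : ℝ≥0) : ℝ≥0∞) with hv
  have hmono : Monotone v := fun _ _ hkl =>
    ENNReal.coe_le_coe.2 (NNRat.cast_le.2 (monotone_add_one_div_add_two hkl))
  have htend : Filter.Tendsto v Filter.atTop (nhds 1) := by
    rw [hv, ← ENNReal.coe_one, ENNReal.tendsto_coe, ← NNReal.tendsto_coe]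
    have := tendsto_natCast_div_add_atTop (1 : ℝ)
    refine ((Filter.tendsto_add_atTop_iff_nat 1).2 this).congr fun k => ?_
    push_cast
    ring
  have hsup : ⨆ k, v k = 1 := tendsto_nhds_unique (tendsto_atTop_iSup hmono) htend
  have := rm.sup_left v hmono (coe_nnrat_pos (by positivity)) s
  rw [hsup, rm.one_smul] at this
  simpa only [hv, ← rm.nnratSMul_of_pos (show (0 : ℚ≥0) < (_ + 1) / (_ + 2) by positivity)]
    using this

end RealMul

/-- refinement property in an O1-O6 semigroup with real multiplication. -/
theorem refinement {S : Type*} [AddCommMonoid S] [PartialOrder S]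
    (hS : CuO6 S) (rm : RealMul S) {n m : ℕ} (hn : 0 < n) (hm : 0 < m)
    (f f' : Fin n → S) (g : Fin m → S)
    (hfg : ∑ i, f i ≤ ∑ j, g j) (hf' : ∀ i, CC (f' i) (f i)) :
    ∃ h : Fin n → Fin m → S,
      (∀ i, CC (f' i) (∑ j, h i j) ∧ CC (∑ j, h i j) (f i)) ∧
      ∀ j, ∑ i, h i j ≤ g j := by
  have : IsOrderedAddMonoid S :=
    { add_le_add_left := fun _ _ hab c => hS.addRightMono hab c }
  let : Module ℚ≥0 S :=
    { smul := rm.nnratSMul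
      one_smul := rm.nnratSMul_one
      mul_smul := RealMul.nnratSMul_mul hS rm
      smul_zero := RealMul.nnratSMul_zero_right hS rm
      smul_add := rm.nnratSMul_add_right
      add_smul := rm.nnratSMul_add_left
      zero_smul := rm.nnratSMul_zero_left }
  have : PosSMulMono ℚ≥0 S := ⟨fun q _ _ _ hst => rm.nnratSMul_mono_right q hst⟩
  exact hS.exists_refinement rm.isLUB_nnratSMul hfg hf'
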